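/- Let R be a ring and let A_1, …, A_n and B_1, …, B_t be biuniform right R-modules. Then A_1 ⊕ ⋯ ⊕ A_n ≅ B_1 ⊕ ⋯ ⊕ B_t if and only if n = t and there exist two permutations σ, τ of {1, …, n} such that A_i and B_{σ(i)} belong to the same monogeny class and A_i and B_{τ(i)} belong to the same epigeny class for every i = 1, …, n. -/

import Mathlib

/-- Two modules belong to the same monogeny class if there are injective homomorphisms
in both directions. -/
def SameMonogenyClass (R : Type*) [Ring R] (M N : Type*) [AddCommGroup M] [Module R M]
    [AddCommGroup N] [Module R N] : Prop :=
  (∃ f : M →ₗ[R] N, Function.Injective f) ∧ ∃ g : N →ₗ[R] M, Function.Injective g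

/-- Two modules belong to the same epigeny class if there are surjective homomorphisms
in both directions. -/
def SameEpigenyClass (R : Type*) [Ring R] (M N : Type*) [AddCommGroup M] [Module R M]
    [AddCommGroup N] [Module R N] : Prop :=
  (∃ f : M →ₗ[R] N, Function.Surjective f) ∧ ∃ g : N →ₗ[R] M, Function.Surjective g

/-- A module is uniform if it is nonzero and any two nonzero submodules intersect
nontrivially. -/
def IsUniformModule (R : Type*) [Ring R] (M : Type*) [AddCommGroup M] [Module R M] : Prop :=
  (∃ x : M, x ≠ 0) ∧ ∀ N P : Submodule R M, N ≠ ⊥ → P ≠ ⊥ → N ⊓ P ≠ ⊥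

/-- A module is couniform (hollow) if it is nonzero and the sum of any two proper
submodules is proper. -/
def IsCouniformModule (R : Type*) [Ring R] (M : Type*) [AddCommGroup M] [Module R M] : Prop :=
  (∃ x : M, x ≠ 0) ∧ ∀ N P : Submodule R M, N ≠ ⊤ → P ≠ ⊤ → N ⊔ P ≠ ⊤

/-- A module is biuniform if it is both uniform and couniform. -/
def IsBiuniformModule (R : Type*) [Ring R] (M : Type*) [AddCommGroup M] [Module R M] : Prop :=
  IsUniformModule R M ∧ IsCouniformModule R M

/-!
Let `φ : ⨁ Aᵢ → ⨁ Bⱼ` be injective. In the modular lattice of submodules of `⨁ Bⱼ`, the images of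
the `Aᵢ` are independent uniform elements and the kernels of the projections onto the `Bⱼ` are
meet-irreducible with meet zero. Given a set `S` of indices `i`, let `T` be the set of those `j`
such that `Aᵢ → Bⱼ` is injective for some `i ∈ S`; uniformity shrinks the `Aᵢ`, `i ∈ S`, to nonzero
submodules that all vanish in `Bⱼ` for `j ∉ T`, and the Kurosh–Ore exchange argument then yields
`|S| ≤ |T|`. So Hall's theorem provides an injection `σ` with all `Aᵢ → B_{σ(i)}` injective.
Epimorphisms are treated by the same argument in the dual lattice. With maps in both directions, the
composite of the two injections of indices is a permutation of finite order, and going round its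
cycles turns the one-way matchings into equalities of monogeny and epigeny classes.

Conversely, isomorphic pairs `Aᵢ ≅ Bⱼ` can be cancelled. If there are none, the injections
`Aᵢ → B_{σ(i)}` sum to an injection with superfluous image and the surjections `Aᵢ → B_{τ(i)}` to a
surjection with essential kernel, and the sum of two such maps is bijective.
-/

open Function LinearMap Submodule

section Lattice

variable {α ι κ : Type*}

/-- `x` is uniform if any two elements that meet `x` nontrivially have a meet that still meets `x`
nontrivially. In the lattice of submodules these are the uniform submodules; in the order dual they
are the submodules with couniform quotient. -/
def IsUniformElement [Lattice α] [OrderBot α] (x : α) : Prop :=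
  x ≠ ⊥ ∧ ∀ a b, ¬Disjoint x a → ¬Disjoint x b → ¬Disjoint x (a ⊓ b)

theorem IsUniformElement.not_disjoint_finset_inf [Lattice α] [BoundedOrder α] {x : α}
    (hx : IsUniformElement x) {s : Finset ι} {f : ι → α} (h : ∀ i ∈ s, ¬Disjoint x (f i)) :
    ¬Disjoint x (s.inf f) :=
  Finset.inf_induction (p := fun y => ¬Disjoint x y) (by simpa using hx.1)
    (fun a ha b hb => hx.2 a b ha hb) h

section Modular

variable [Lattice α] [BoundedOrder α] [IsModularLattice α]

theorem exists_disjoint_of_infIrred {b c : α} (hb : InfIrred b) (hcb : Disjoint c b)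
    {s : Finset ι} (hs : s.Nonempty) {d : ι → α} (hcd : Disjoint c (s.inf d)) :
    ∃ i ∈ s, Disjoint c (d i) := by
  set e : ι → α := fun i => c ⊓ d i ⊔ b
  have e_inf_le (i : ι) : e i ⊓ c ≤ d i := by
    rw [sup_inf_assoc_of_le b inf_le_left, hcb.symm.eq_bot, sup_bot_eq]
    exact inf_le_right
  have inf_e : s.inf e = b := by
    symm
    refine eq_of_le_of_inf_le_of_sup_le (z := c) (Finset.le_inf fun _ _ => le_sup_right) ?_ ?_
    · have inf_e_le : s.inf e ⊓ c ≤ s.inf d := Finset.le_inf fun i hi =>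
        (inf_le_inf_right c (Finset.inf_le hi)).trans (e_inf_le i)
      exact (hcd inf_le_right inf_e_le).trans bot_le
    · obtain ⟨i, hi⟩ := hs
      exact sup_le ((Finset.inf_le hi).trans (sup_comm b c ▸ sup_le_sup_right inf_le_left b))
        le_sup_right
  obtain ⟨i, hi, hei⟩ := hb.finset_inf_eq inf_e
  have inf_le_b : c ⊓ d i ≤ b := hei ▸ le_sup_left
  exact ⟨i, hi, disjoint_iff_inf_le.2 (hcb inf_le_left inf_le_b)⟩

open Finset in
/-- A one-sided form of the Kurosh–Ore theorem. -/
theorem exists_subset_card_le_disjoint_inf {t : Finset κ} {b : κ → α}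
    (hb : ∀ j ∈ t, InfIrred (b j)) {c : α} (hcb : Disjoint c (t.inf b)) {s : Finset ι} {d : ι → α}
    (hcd : Disjoint c (s.inf d)) : ∃ s' ⊆ s, #s' ≤ #t ∧ Disjoint c (s'.inf d) := by
  classical
  induction t using Finset.cons_induction generalizing c with
  | empty => exact ⟨∅, empty_subset s, le_rfl, hcb⟩
  | cons j t hj ih =>
    rw [forall_mem_cons] at hb
    rw [inf_cons, ← disjoint_assoc] at hcb
    obtain ⟨s', hs's, hcard, hs'⟩ := ih hb.2 hcb (hcd.mono_left inf_le_left)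
    rw [card_cons]
    obtain rfl | hs := s.eq_empty_or_nonempty
    · exact ⟨∅, subset_rfl, Nat.zero_le _, hcd⟩
    · obtain ⟨i, hi, hdi⟩ := exists_disjoint_of_infIrred (c := c ⊓ s'.inf d) hb.1
        (by rwa [disjoint_iff, inf_right_comm, ← disjoint_iff]) hs (hcd.mono_left inf_le_left)
      refine ⟨insert i s', insert_subset hi hs's, (card_insert_le i s').trans (by gcongr), ?_⟩
      rwa [inf_insert, inf_comm, ← disjoint_assoc]

end Modular

open Finset in
theorem card_le_card_of_forall_not_disjoint [CompleteLattice α] [IsModularLattice α]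
    [Finite κ] {x d : ι → α} {b : κ → α} (hx : ∀ i, IsUniformElement (x i))
    (hxd : ∀ i i', i ≠ i' → x i ≤ d i') (hd : Disjoint (⨆ i, x i) (⨅ i, d i))
    (hb : ∀ j, InfIrred (b j)) (hb_inf : ⨅ j, b j = ⊥) {S : Finset ι} {T : Finset κ}
    (hST : ∀ i ∈ S, ∀ j ∉ T, ¬Disjoint (x i) (b j)) : #S ≤ #T := by
  classical
  have := Fintype.ofFinite κ
  set k : ι → α := fun i => x i ⊓ Tᶜ.inf b
  have k_le_x (i : ι) : k i ≤ x i := inf_le_left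
  have k_le_b (i : ι) {j : κ} (hj : j ∉ T) : k i ≤ b j :=
    inf_le_right.trans (Finset.inf_le (mem_compl.2 hj))
  have k_ne_bot (i : ι) (hi : i ∈ S) : k i ≠ ⊥ := fun h =>
    (hx i).not_disjoint_finset_inf (fun j hj => hST i hi j (mem_compl.1 hj)) (disjoint_iff.2 h)
  have hcb : Disjoint (S.sup k) (T.inf b) := by
    rw [disjoint_iff_inf_le, ← hb_inf]
    refine le_iInf fun j => ?_
    by_cases hj : j ∈ T
    · exact inf_le_right.trans (Finset.inf_le hj)
    · exact inf_le_left.trans (Finset.sup_le fun i _ => k_le_b i hj)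
  have hcd : Disjoint (S.sup k) (S.inf d) := by
    have k_le_iSup : S.sup k ≤ ⨆ i, x i := Finset.sup_le fun i _ => (k_le_x i).trans (le_iSup x i)
    refine disjoint_iff_inf_le.2 (hd (inf_le_left.trans k_le_iSup) (le_iInf fun i => ?_))
    by_cases hi : i ∈ S
    · exact inf_le_right.trans (Finset.inf_le hi)
    · exact inf_le_left.trans (Finset.sup_le fun i' hi' =>
        (k_le_x i').trans (hxd i' i (ne_of_mem_of_not_mem hi' hi)))
  obtain ⟨S', -, hcard, hS'⟩ := exists_subset_card_le_disjoint_inf (fun j _ => hb j) hcb hcd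
  refine (card_le_card fun i hi => ?_).trans hcard
  by_contra hi'
  have k_le_d : k i ≤ S'.inf d := Finset.le_inf fun i' h =>
    (k_le_x i).trans (hxd i i' (ne_of_mem_of_not_mem h hi').symm)
  exact k_ne_bot i hi (le_bot_iff.1 (hS' (Finset.le_sup hi) k_le_d))

theorem exists_injective_forall_disjoint [CompleteLattice α] [IsModularLattice α]
    [Finite κ] {x d : ι → α} {b : κ → α} (hx : ∀ i, IsUniformElement (x i))
    (hxd : ∀ i i', i ≠ i' → x i ≤ d i') (hd : Disjoint (⨆ i, x i) (⨅ i, d i))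
    (hb : ∀ j, InfIrred (b j)) (hb_inf : ⨅ j, b j = ⊥) :
    ∃ σ : ι → κ, Injective σ ∧ ∀ i, Disjoint (x i) (b (σ i)) := by
  classical
  have := Fintype.ofFinite κ
  refine (Fintype.all_card_le_filter_rel_iff_exists_injective
    fun i j => Disjoint (x i) (b j)).1 fun S => ?_
  refine card_le_card_of_forall_not_disjoint hx hxd hd hb hb_inf fun i hi j hj hij => hj ?_
  exact Finset.mem_filter.2 ⟨Finset.mem_univ j, i, hi, hij⟩

end Lattice

section Matching

variable {ι κ : Type*}

theorem exists_equiv_of_mutual_matching [Finite κ] {r : ι → κ → Prop} {s : κ → ι → Prop}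
    {σ : ι → κ} {τ : κ → ι} (hσ : Injective σ) (hτ : Injective τ) (hr : ∀ i, r i (σ i))
    (hs : ∀ j, s j (τ j)) (hsrs : ∀ {j i j' i'}, s j i → r i j' → s j' i' → s j i') :
    ∃ e : ι ≃ κ, ∀ i, r i (e i) ∧ s (e i) i := by
  have := Finite.of_injective σ hσ
  have s_iterate (i : ι) (m : ℕ) : s (σ i) ((τ ∘ σ)^[m + 1] i) := by
    induction m with
    | zero => exact hs (σ i)
    | succ m ih =>
      rw [iterate_succ_apply']
      exact hsrs ih (hr _) (hs _)
  have hσ_bij : Bijective σ :=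
    (Nat.bijective_iff_injective_and_card σ).2 ⟨hσ,
      (Nat.card_le_card_of_injective σ hσ).antisymm (Nat.card_le_card_of_injective τ hτ)⟩
  refine ⟨Equiv.ofBijective σ hσ_bij, fun i => ⟨hr i, ?_⟩⟩
  obtain ⟨m, hm, hmi⟩ := (hτ.comp hσ).mem_periodicPts i
  obtain ⟨m, rfl⟩ := Nat.exists_eq_succ_of_ne_zero hm.ne'
  have := s_iterate i m
  rwa [hmi.eq] at this

theorem exists_equiv_compl_of_difunctional {r : ι → κ → Prop}
    (hr : ∀ {i i' j j'}, r i j → r i' j → r i' j' → r i j') {i₀ : ι} {j₀ : κ} (h₀ : r i₀ j₀)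
    {e : ι ≃ κ} (he : ∀ i, r i (e i)) :
    ∃ e' : {i // i ≠ i₀} ≃ {j // j ≠ j₀}, ∀ i : {i // i ≠ i₀}, r i (e' i) := by
  classical
  set e₁ := e.trans (Equiv.swap (e i₀) j₀)
  have he₁ : e₁ i₀ = j₀ := by simp [e₁]
  refine ⟨e₁.subtypeEquiv fun i => by rw [← he₁, e₁.injective.ne_iff], fun ⟨i, hi⟩ => ?_⟩
  change r i (Equiv.swap (e i₀) j₀ (e i))
  rw [Equiv.swap_apply_def, if_neg (e.injective.ne hi)]
  split_ifs with h
  · exact hr (h ▸ he i) h₀ (he i₀)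
  · exact he i

end Matching

namespace SameMonogenyClass

variable {R M N P : Type*} [Ring R] [AddCommGroup M] [Module R M] [AddCommGroup N] [Module R N]
  [AddCommGroup P] [Module R P]

theorem of_linearEquiv (e : M ≃ₗ[R] N) : SameMonogenyClass R M N :=
  ⟨⟨e, e.injective⟩, e.symm, e.symm.injective⟩

protected theorem symm (h : SameMonogenyClass R M N) : SameMonogenyClass R N M :=
  ⟨h.2, h.1⟩

protected theorem trans :
    SameMonogenyClass R M N → SameMonogenyClass R N P → SameMonogenyClass R M P
  | ⟨⟨f, hf⟩, g, hg⟩, ⟨⟨f', hf'⟩, g', hg'⟩ =>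
    ⟨⟨f' ∘ₗ f, hf'.comp hf⟩, g ∘ₗ g', hg.comp hg'⟩

end SameMonogenyClass

namespace SameEpigenyClass

variable {R M N P : Type*} [Ring R] [AddCommGroup M] [Module R M] [AddCommGroup N] [Module R N]
  [AddCommGroup P] [Module R P]

theorem of_linearEquiv (e : M ≃ₗ[R] N) : SameEpigenyClass R M N :=
  ⟨⟨e, e.surjective⟩, e.symm, e.symm.surjective⟩

protected theorem symm (h : SameEpigenyClass R M N) : SameEpigenyClass R N M :=
  ⟨h.2, h.1⟩

protected theorem trans :
    SameEpigenyClass R M N → SameEpigenyClass R N P → SameEpigenyClass R M P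
  | ⟨⟨f, hf⟩, g, hg⟩, ⟨⟨f', hf'⟩, g', hg'⟩ =>
    ⟨⟨f' ∘ₗ f, hf'.comp hf⟩, g ∘ₗ g', hg.comp hg'⟩

end SameEpigenyClass

section Biuniform

variable {R M N : Type*} [Ring R] [AddCommGroup M] [Module R M] [AddCommGroup N] [Module R N]

theorem IsUniformModule.nontrivial (h : IsUniformModule R M) : Nontrivial M :=
  nontrivial_iff_exists_ne 0 |>.2 h.1

theorem IsCouniformModule.nontrivial (h : IsCouniformModule R M) : Nontrivial M :=
  nontrivial_iff_exists_ne 0 |>.2 h.1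

theorem disjoint_range_iff_comap_eq_bot {f : M →ₗ[R] N} (hf : Injective f) {q : Submodule R N} :
    Disjoint (range f) q ↔ comap f q = ⊥ := by
  rw [disjoint_iff, ← map_comap_eq, ← Submodule.map_bot f, (map_injective_of_injective hf).eq_iff]

theorem codisjoint_ker_iff_map_eq_top {f : M →ₗ[R] N} (hf : Surjective f) {p : Submodule R M} :
    Codisjoint (ker f) p ↔ map f p = ⊤ := by
  rw [codisjoint_iff, sup_comm, ← comap_map_eq, ← Submodule.comap_top f,
    (comap_injective_of_surjective hf).eq_iff]

theorem IsUniformModule.isUniformElement_range (hM : IsUniformModule R M) {f : M →ₗ[R] N}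
    (hf : Injective f) : IsUniformElement (range f) := by
  have := hM.nontrivial
  refine ⟨range_eq_bot.not.2 (ne_zero_of_injective hf), fun a b => ?_⟩
  simp only [disjoint_range_iff_comap_eq_bot hf, comap_inf]
  exact hM.2 _ _

theorem IsCouniformModule.isUniformElement_toDual_ker (hN : IsCouniformModule R N) {f : M →ₗ[R] N}
    (hf : Surjective f) : IsUniformElement (OrderDual.toDual (ker f)) := by
  have := hN.nontrivial
  refine ⟨ker_eq_top.not.2 (ne_zero_of_surjective hf), fun a b => ?_⟩
  have disjoint_iff (p : (Submodule R M)ᵒᵈ) :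
      Disjoint (OrderDual.toDual (ker f)) p ↔ map f (OrderDual.ofDual p) = ⊤ :=
    codisjoint_ker_iff_map_eq_top hf
  simp only [disjoint_iff, ofDual_inf, Submodule.map_sup]
  exact hN.2 _ _

theorem IsUniformModule.infIrred_ker (hN : IsUniformModule R N) {f : M →ₗ[R] N}
    (hf : Surjective f) : InfIrred (ker f) := by
  have := hN.nontrivial
  refine ⟨isMax_iff_eq_top.not.2 (ker_eq_top.not.2 (ne_zero_of_surjective hf)), fun p q hpq => ?_⟩
  have hp : comap f (map f p) = p := comap_map_eq_self (hpq ▸ inf_le_left)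
  have hq : comap f (map f q) = q := comap_map_eq_self (hpq ▸ inf_le_right)
  have hmap : map f p ⊓ map f q = ⊥ := comap_injective_of_surjective hf <| by
    rw [comap_inf, hp, hq, hpq, Submodule.comap_bot]
  by_contra! hne
  refine hN.2 _ _ (fun hbot => hne.1 ?_) (fun hbot => hne.2 ?_) hmap
  · rw [← hp, hbot, Submodule.comap_bot]
  · rw [← hq, hbot, Submodule.comap_bot]

theorem IsCouniformModule.supIrred_range (hM : IsCouniformModule R M) {f : M →ₗ[R] N}
    (hf : Injective f) : SupIrred (range f) := by
  have := hM.nontrivial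
  refine ⟨isMin_iff_eq_bot.not.2 (range_eq_bot.not.2 (ne_zero_of_injective hf)), fun p q hpq => ?_⟩
  have hp : map f (comap f p) = p := map_comap_eq_self (hpq ▸ le_sup_left)
  have hq : map f (comap f q) = q := map_comap_eq_self (hpq ▸ le_sup_right)
  have hcomap : comap f p ⊔ comap f q = ⊤ := map_injective_of_injective hf <| by
    rw [Submodule.map_sup, hp, hq, hpq, Submodule.map_top]
  by_contra! hne
  refine hM.2 _ _ (fun htop => hne.1 ?_) (fun htop => hne.2 ?_) hcomap
  · rw [← hp, htop, Submodule.map_top]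
  · rw [← hq, htop, Submodule.map_top]

end Biuniform

section Pi

variable {R : Type*} [Semiring R] {ι κ : Type*} {A : ι → Type*} {B : κ → Type*}
  [∀ i, AddCommMonoid (A i)] [∀ i, Module R (A i)] [∀ j, AddCommMonoid (B j)] [∀ j, Module R (B j)]

theorem range_single_le_ker_proj [DecidableEq ι] {i i' : ι} (h : i ≠ i') :
    range (single R A i) ≤ ker (proj i') := by
  rw [range_le_ker_iff, proj_comp_single_ne R A i' i h.symm]

theorem ker_piMap {C : ι → Type*} [∀ i, AddCommMonoid (C i)] [∀ i, Module R (C i)]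
    (f : ∀ i, A i →ₗ[R] C i) : ker (piMap f) = Submodule.pi Set.univ fun i => ker (f i) := by
  ext x
  simp [funext_iff]

theorem range_piMap {C : ι → Type*} [∀ i, AddCommMonoid (C i)] [∀ i, Module R (C i)]
    (f : ∀ i, A i →ₗ[R] C i) : range (piMap f) = Submodule.pi Set.univ fun i => range (f i) := by
  ext y
  simp [funext_iff, Classical.skolem]

/-- The linear version of `Equiv.piSplitAt`. -/
def linearEquivPiSplitAt (R : Type*) [Semiring R] {ι : Type*} [DecidableEq ι] (i₀ : ι)
    (A : ι → Type*) [∀ i, AddCommMonoid (A i)] [∀ i, Module R (A i)] :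
    (∀ i, A i) ≃ₗ[R] A i₀ × ∀ i : {i // i ≠ i₀}, A i :=
  { Equiv.piSplitAt i₀ A with
    map_add' := fun _ _ => rfl
    map_smul' := fun _ _ => rfl }

theorem nonempty_pi_linearEquiv_of_compl {i₀ : ι} {j₀ : κ} (e₀ : A i₀ ≃ₗ[R] B j₀)
    (e : (∀ i : {i // i ≠ i₀}, A i) ≃ₗ[R] ∀ j : {j // j ≠ j₀}, B j) :
    Nonempty ((∀ i, A i) ≃ₗ[R] ∀ j, B j) := by
  classical
  exact ⟨linearEquivPiSplitAt R i₀ A ≪≫ₗ e₀.prodCongr e ≪≫ₗ (linearEquivPiSplitAt R j₀ B).symm⟩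

end Pi

section PiMatching

variable {R : Type*} [Ring R] {ι κ : Type*} {A : ι → Type*} {B : κ → Type*}
  [∀ i, AddCommGroup (A i)] [∀ i, Module R (A i)] [∀ j, AddCommGroup (B j)] [∀ j, Module R (B j)]

theorem exists_injective_forall_exists_injective [Finite κ] (hA : ∀ i, IsUniformModule R (A i))
    (hB : ∀ j, IsUniformModule R (B j)) {φ : (∀ i, A i) →ₗ[R] ∀ j, B j} (hφ : Injective φ) :
    ∃ σ : ι → κ, Injective σ ∧ ∀ i, ∃ f : A i →ₗ[R] B (σ i), Injective f := by
  classical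
  have hφ_single (i : ι) : Injective (φ ∘ₗ single R A i) := hφ.comp (Pi.single_injective i)
  set x : ι → Submodule R (∀ j, B j) := fun i => range (φ ∘ₗ single R A i)
  set d : ι → Submodule R (∀ j, B j) := fun i => map φ (ker (proj i))
  have hxd (i i' : ι) (h : i ≠ i') : x i ≤ d i' :=
    (range_comp _ _).trans_le (map_mono (range_single_le_ker_proj h))
  have hd : Disjoint (⨆ i, x i) (⨅ i, d i) :=
    Disjoint.mono_left (iSup_le fun i => range_comp_le_range _ φ) <|
      (disjoint_range_iff_comap_eq_bot hφ).2 <|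
        (comap_iInf_map_of_injective hφ _).trans iInf_ker_proj
  obtain ⟨σ, hσ, hσ_disj⟩ := exists_injective_forall_disjoint
    (fun i => (hA i).isUniformElement_range (hφ_single i)) hxd hd
    (fun j => (hB j).infIrred_ker (proj_surjective j)) iInf_ker_proj
  refine ⟨σ, hσ, fun i => ⟨proj (σ i) ∘ₗ φ ∘ₗ single R A i, ?_⟩⟩
  rw [← ker_eq_bot, ker_comp]
  exact (disjoint_range_iff_comap_eq_bot (hφ_single i)).1 (hσ_disj i)

theorem exists_injective_forall_exists_surjective [Finite ι] [Finite κ]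
    (hA : ∀ i, IsCouniformModule R (A i)) (hB : ∀ j, IsCouniformModule R (B j))
    {φ : (∀ j, B j) →ₗ[R] ∀ i, A i} (hφ : Surjective φ) :
    ∃ σ : ι → κ, Injective σ ∧ ∀ i, ∃ f : B (σ i) →ₗ[R] A i, Surjective f := by
  classical
  have hproj_φ (i : ι) : Surjective ((proj i : (∀ i, A i) →ₗ[R] A i) ∘ₗ φ) :=
    (surjective_eval i).comp hφ
  set x : ι → (Submodule R (∀ j, B j))ᵒᵈ :=
    fun i => OrderDual.toDual (ker ((proj i : (∀ i, A i) →ₗ[R] A i) ∘ₗ φ))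
  set d : ι → (Submodule R (∀ j, B j))ᵒᵈ :=
    fun i => OrderDual.toDual (comap φ (range (single R A i)))
  have hxd (i i' : ι) (h : i ≠ i') : x i ≤ d i' :=
    OrderDual.toDual_le_toDual.2 <|
      (comap_mono (range_single_le_ker_proj h.symm)).trans_eq (ker_comp _ _).symm
  have hd : Disjoint (⨆ i, x i) (⨅ i, d i) :=
    Disjoint.mono_left (iSup_le fun i => OrderDual.toDual_le_toDual.2 (ker_le_ker_comp φ _)) <| by
      rw [← toDual_iSup, disjoint_toDual_iff, codisjoint_ker_iff_map_eq_top hφ]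
      exact (map_iSup_comap_of_surjective hφ _).trans (iSup_range_single R A)
  obtain ⟨σ, hσ, hσ_disj⟩ := exists_injective_forall_disjoint
    (fun i => (hA i).isUniformElement_toDual_ker (hproj_φ i)) hxd hd
    (fun j => infIrred_toDual.2 ((hB j).supIrred_range (Pi.single_injective j)))
    (congrArg OrderDual.toDual (iSup_range_single R B))
  refine ⟨σ, hσ, fun i => ⟨(proj i ∘ₗ φ) ∘ₗ single R B (σ i), ?_⟩⟩
  rw [← range_eq_top, range_comp]
  exact (codisjoint_ker_iff_map_eq_top (hproj_φ i)).1 (hσ_disj i)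

theorem SameMonogenyClass.exists_equiv [Finite κ]
    (h : SameMonogenyClass R (∀ i, A i) (∀ j, B j)) (hA : ∀ i, IsUniformModule R (A i))
    (hB : ∀ j, IsUniformModule R (B j)) :
    ∃ σ : ι ≃ κ, ∀ i, SameMonogenyClass R (A i) (B (σ i)) := by
  obtain ⟨⟨φ, hφ⟩, ψ, hψ⟩ := h
  obtain ⟨σ, hσ, hAB⟩ := exists_injective_forall_exists_injective hA hB hφ
  have := Finite.of_injective σ hσ
  obtain ⟨τ, hτ, hBA⟩ := exists_injective_forall_exists_injective hB hA hψ
  exact exists_equiv_of_mutual_matching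
    (r := fun i j => ∃ f : A i →ₗ[R] B j, Injective f)
    (s := fun j i => ∃ g : B j →ₗ[R] A i, Injective g)
    hσ hτ hAB hBA fun ⟨f, hf⟩ ⟨g, hg⟩ ⟨k, hk⟩ => ⟨k ∘ₗ g ∘ₗ f, hk.comp (hg.comp hf)⟩

theorem SameEpigenyClass.exists_equiv [Finite ι] [Finite κ]
    (h : SameEpigenyClass R (∀ i, A i) (∀ j, B j)) (hA : ∀ i, IsCouniformModule R (A i))
    (hB : ∀ j, IsCouniformModule R (B j)) :
    ∃ σ : ι ≃ κ, ∀ i, SameEpigenyClass R (A i) (B (σ i)) := by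
  obtain ⟨⟨φ, hφ⟩, ψ, hψ⟩ := h
  obtain ⟨σ, hσ, hBA⟩ := exists_injective_forall_exists_surjective hA hB hψ
  obtain ⟨τ, hτ, hAB⟩ := exists_injective_forall_exists_surjective hB hA hφ
  obtain ⟨e, he⟩ := exists_equiv_of_mutual_matching
    (r := fun i j => ∃ g : B j →ₗ[R] A i, Surjective g)
    (s := fun j i => ∃ f : A i →ₗ[R] B j, Surjective f)
    hσ hτ hBA hAB fun ⟨f, hf⟩ ⟨g, hg⟩ ⟨k, hk⟩ => ⟨f ∘ₗ g ∘ₗ k, hf.comp (hg.comp hk)⟩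
  exact ⟨e, fun i => (he i).symm⟩

end PiMatching

section Essential

variable {R M N : Type*} [Ring R] [AddCommGroup M] [Module R M] [AddCommGroup N] [Module R N]

/-- Essential (large) submodules: every nonzero submodule meets `p` nontrivially. -/
def IsEssentialSubmodule (p : Submodule R M) : Prop :=
  ∀ K : Submodule R M, Disjoint K p → K = ⊥

/-- Superfluous (small) submodules: no proper submodule adds up with `p` to the whole module. -/
def IsSuperfluousSubmodule (p : Submodule R M) : Prop :=
  ∀ K : Submodule R M, Codisjoint K p → K = ⊤

theorem IsUniformModule.isEssentialSubmodule (hM : IsUniformModule R M) {p : Submodule R M}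
    (hp : p ≠ ⊥) : IsEssentialSubmodule p := fun K hK => by
  by_contra hK'
  exact hM.2 K p hK' hp hK.eq_bot

theorem IsCouniformModule.isSuperfluousSubmodule (hM : IsCouniformModule R M) {p : Submodule R M}
    (hp : p ≠ ⊤) : IsSuperfluousSubmodule p := fun K hK => by
  by_contra hK'
  exact hM.2 K p hK' hp hK.eq_top

namespace IsEssentialSubmodule

theorem top : IsEssentialSubmodule (⊤ : Submodule R M) := fun _ => disjoint_top.1

protected theorem inf {p q : Submodule R M} (hp : IsEssentialSubmodule p)
    (hq : IsEssentialSubmodule q) : IsEssentialSubmodule (p ⊓ q) := fun K hK =>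
  hp K (disjoint_iff.2 (hq (K ⊓ p) (disjoint_assoc.2 hK)))

protected theorem iInf {ι : Type*} [Finite ι] {p : ι → Submodule R M}
    (hp : ∀ i, IsEssentialSubmodule (p i)) : IsEssentialSubmodule (⨅ i, p i) := by
  have := Fintype.ofFinite ι
  rw [← Finset.inf_univ_eq_iInf]
  exact Finset.inf_induction top (fun _ ha _ hb => ha.inf hb) fun i _ => hp i

protected theorem comap {q : Submodule R N} (hq : IsEssentialSubmodule q) (f : M →ₗ[R] N) :
    IsEssentialSubmodule (comap f q) := fun K hK => by
  have hdisj : Disjoint (map f K) q := by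
    rw [disjoint_iff, map_inf_eq_map_inf_comap, hK.eq_bot, Submodule.map_bot]
  exact hK.eq_bot_of_le (map_le_iff_le_comap.1 ((hq _ hdisj).trans_le bot_le))

protected theorem pi {ι : Type*} [Finite ι] {A : ι → Type*} [∀ i, AddCommGroup (A i)]
    [∀ i, Module R (A i)] {p : ∀ i, Submodule R (A i)} (hp : ∀ i, IsEssentialSubmodule (p i)) :
    IsEssentialSubmodule (Submodule.pi Set.univ p) := by
  rw [← iInf_comap_proj]
  exact .iInf fun i => (hp i).comap (proj i)

end IsEssentialSubmodule

namespace IsSuperfluousSubmodule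

theorem bot : IsSuperfluousSubmodule (⊥ : Submodule R M) := fun _ => codisjoint_bot.1

protected theorem sup {p q : Submodule R M} (hp : IsSuperfluousSubmodule p)
    (hq : IsSuperfluousSubmodule q) : IsSuperfluousSubmodule (p ⊔ q) := fun K hK =>
  hp K (codisjoint_iff.2 (hq (K ⊔ p) (codisjoint_assoc.2 hK)))

protected theorem iSup {ι : Type*} [Finite ι] {p : ι → Submodule R M}
    (hp : ∀ i, IsSuperfluousSubmodule (p i)) : IsSuperfluousSubmodule (⨆ i, p i) := by
  have := Fintype.ofFinite ι
  rw [← Finset.sup_univ_eq_iSup]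
  exact Finset.sup_induction bot (fun _ ha _ hb => ha.sup hb) fun i _ => hp i

protected theorem map {p : Submodule R M} (hp : IsSuperfluousSubmodule p) (f : M →ₗ[R] N) :
    IsSuperfluousSubmodule (map f p) := fun K hK => by
  have hcodisj : Codisjoint (comap f K) p := by
    refine codisjoint_iff.2 (eq_top_iff.2 fun x _ => ?_)
    obtain ⟨k, hk, y, ⟨z, hz, rfl⟩, hx⟩ := mem_sup.1 (hK.eq_top.ge (mem_top (x := f x)))
    have hxz : x - z ∈ comap f K := by
      rwa [mem_comap, map_sub, ← hx, add_sub_cancel_right]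
    exact mem_sup.2 ⟨x - z, hxz, z, hz, sub_add_cancel x z⟩
  exact hK.eq_top_of_le (map_le_iff_le_comap.2 (le_top.trans_eq (hp _ hcodisj).symm))

protected theorem pi {ι : Type*} [Finite ι] {A : ι → Type*} [∀ i, AddCommGroup (A i)]
    [∀ i, Module R (A i)] {p : ∀ i, Submodule R (A i)} (hp : ∀ i, IsSuperfluousSubmodule (p i)) :
    IsSuperfluousSubmodule (Submodule.pi Set.univ p) := by
  classical
  rw [← iSup_map_single]
  exact .iSup fun i => (hp i).map (single R A i)

end IsSuperfluousSubmodule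

theorem bijective_add_of_isEssential_ker_of_isSuperfluous_range {f g : M →ₗ[R] N}
    (hf : Injective f) (hf' : IsSuperfluousSubmodule (range f)) (hg : Surjective g)
    (hg' : IsEssentialSubmodule (ker g)) : Bijective (f + g) := by
  refine ⟨ker_eq_bot.1 (hg' _ ?_), range_eq_top.1 (hf' _ ?_)⟩
  · refine disjoint_def.2 fun x hx hgx => hf ?_
    rw [mem_ker, LinearMap.add_apply, mem_ker.1 hgx, add_zero] at hx
    rw [hx, map_zero]
  · refine codisjoint_iff.2 (eq_top_iff.2 fun y _ => ?_)
    obtain ⟨x, rfl⟩ := hg y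
    exact mem_sup.2 ⟨(f + g) x, mem_range_self _ x, f (-x), mem_range_self f _, by simp⟩

end Essential

section PiIso

variable {R : Type*} [Ring R] {ι κ : Type*} {A : ι → Type*} {B : κ → Type*}
  [∀ i, AddCommGroup (A i)] [∀ i, Module R (A i)] [∀ j, AddCommGroup (B j)] [∀ j, Module R (B j)]

theorem nonempty_pi_linearEquiv_of_injective_of_surjective [Finite ι]
    (hA : ∀ i, IsUniformModule R (A i)) (hB : ∀ j, IsCouniformModule R (B j)) (σ τ : ι ≃ κ)
    {f : ∀ i, A i →ₗ[R] B (σ i)} {g : ∀ i, A i →ₗ[R] B (τ i)}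
    (hf : ∀ i, Injective (f i)) (hf' : ∀ i, ¬Surjective (f i))
    (hg : ∀ i, Surjective (g i)) (hg' : ∀ i, ¬Injective (g i)) :
    Nonempty ((∀ i, A i) ≃ₗ[R] ∀ j, B j) := by
  set F : (∀ i, A i) →ₗ[R] ∀ j, B j := LinearEquiv.piCongrLeft R B σ ∘ₗ piMap f
  set G : (∀ i, A i) →ₗ[R] ∀ j, B j := LinearEquiv.piCongrLeft R B τ ∘ₗ piMap g
  have hF : Injective F := (LinearEquiv.piCongrLeft R B σ).injective.comp (Injective.piMap hf)
  have hG : Surjective G := (LinearEquiv.piCongrLeft R B τ).surjective.comp (Surjective.piMap hg)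
  have hF' : IsSuperfluousSubmodule (range F) := by
    rw [range_comp, range_piMap]
    exact (IsSuperfluousSubmodule.pi fun i => (hB (σ i)).isSuperfluousSubmodule
      (range_eq_top.not.2 (hf' i))).map _
  have hG' : IsEssentialSubmodule (ker G) := by
    rw [LinearEquiv.ker_comp, ker_piMap]
    exact IsEssentialSubmodule.pi fun i => (hA i).isEssentialSubmodule (ker_eq_bot.not.2 (hg' i))
  exact ⟨LinearEquiv.ofBijective (F + G)
    (bijective_add_of_isEssential_ker_of_isSuperfluous_range hF hF' hG hG')⟩

theorem nonempty_pi_linearEquiv_of_same_classes [Finite ι]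
    (hA : ∀ i, IsUniformModule R (A i)) (hB : ∀ j, IsCouniformModule R (B j)) (σ τ : ι ≃ κ)
    (hσ : ∀ i, SameMonogenyClass R (A i) (B (σ i)))
    (hτ : ∀ i, SameEpigenyClass R (A i) (B (τ i))) :
    Nonempty ((∀ i, A i) ≃ₗ[R] ∀ j, B j) := by
  induction hn : Nat.card ι using Nat.strong_induction_on generalizing ι κ with
  | _ n ih =>
    subst hn
    by_cases hiso : ∃ i₀ j₀, Nonempty (A i₀ ≃ₗ[R] B j₀)
    · obtain ⟨i₀, j₀, ⟨e₀⟩⟩ := hiso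
      obtain ⟨σ', hσ'⟩ := exists_equiv_compl_of_difunctional
        (r := fun i j => SameMonogenyClass R (A i) (B j))
        (fun h h' h'' => h.trans (h'.symm.trans h'')) (.of_linearEquiv e₀) hσ
      obtain ⟨τ', hτ'⟩ := exists_equiv_compl_of_difunctional
        (r := fun i j => SameEpigenyClass R (A i) (B j))
        (fun h h' h'' => h.trans (h'.symm.trans h'')) (.of_linearEquiv e₀) hτ
      have hcard : Nat.card {i // i ≠ i₀} < Nat.card ι := Finite.card_subtype_lt (x := i₀) (by simp)
      obtain ⟨e⟩ := ih _ hcard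
        (A := fun i : {i // i ≠ i₀} => A i) (B := fun j : {j // j ≠ j₀} => B j)
        (fun i => hA i) (fun j => hB j) σ' τ' hσ' hτ' rfl
      exact nonempty_pi_linearEquiv_of_compl e₀ e
    · choose f hf using fun i => (hσ i).1
      choose g hg using fun i => (hτ i).1
      refine nonempty_pi_linearEquiv_of_injective_of_surjective hA hB σ τ hf (fun i hi => ?_) hg
        fun i hi => ?_
      · exact hiso ⟨i, σ i, ⟨.ofBijective (f i) ⟨hf i, hi⟩⟩⟩
      · exact hiso ⟨i, τ i, ⟨.ofBijective (g i) ⟨hi, hg i⟩⟩⟩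

end PiIso

theorem weak_krull_schmidt_biuniform_general {R : Type*} [Ring R] {ι κ : Type*} [Finite κ]
    {A : ι → Type*} {B : κ → Type*} [∀ i, AddCommGroup (A i)] [∀ i, Module R (A i)]
    [∀ j, AddCommGroup (B j)] [∀ j, Module R (B j)]
    (hA : ∀ i, IsBiuniformModule R (A i)) (hB : ∀ j, IsBiuniformModule R (B j)) :
    List.TFAE [
      Nonempty ((∀ i, A i) ≃ₗ[R] ∀ j, B j),
      SameMonogenyClass R (∀ i, A i) (∀ j, B j) ∧ SameEpigenyClass R (∀ i, A i) (∀ j, B j),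
      ∃ σ τ : ι ≃ κ, (∀ i, SameMonogenyClass R (A i) (B (σ i))) ∧
        ∀ i, SameEpigenyClass R (A i) (B (τ i))] := by
  tfae_have 1 → 2
  | ⟨e⟩ => ⟨.of_linearEquiv e, .of_linearEquiv e⟩
  tfae_have 2 → 3
  | ⟨hmono, hepi⟩ => by
    obtain ⟨σ, hσ⟩ := hmono.exists_equiv (fun i => (hA i).1) fun j => (hB j).1
    have := Finite.of_equiv κ σ.symm
    obtain ⟨τ, hτ⟩ := hepi.exists_equiv (fun i => (hA i).2) fun j => (hB j).2
    exact ⟨σ, τ, hσ, hτ⟩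
  tfae_have 3 → 1
  | ⟨σ, τ, hσ, hτ⟩ =>
    have := Finite.of_equiv κ σ.symm
    nonempty_pi_linearEquiv_of_same_classes (fun i => (hA i).1) (fun j => (hB j).2) σ τ hσ hτ
  tfae_finish

/-- Weak Krull-Schmidt theorem for finite direct sums of biuniform modules:
`A₁ ⊕ ⋯ ⊕ Aₙ ≅ B₁ ⊕ ⋯ ⊕ B_t` iff `n = t` and the monogeny classes and the epigeny classes
of the two families coincide up to two permutations. -/
theorem weak_krull_schmidt_biuniform
    {R : Type*} [Ring R] {n t : ℕ}
    (A : Fin n → Type*) (B : Fin t → Type*)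
    [∀ i, AddCommGroup (A i)] [∀ i, Module R (A i)]
    [∀ j, AddCommGroup (B j)] [∀ j, Module R (B j)]
    (hA : ∀ i, IsBiuniformModule R (A i)) (hB : ∀ j, IsBiuniformModule R (B j)) :
    Nonempty (((i : Fin n) → A i) ≃ₗ[R] ((j : Fin t) → B j)) ↔
      n = t ∧ ∃ σ τ : Fin n ≃ Fin t,
        (∀ i, SameMonogenyClass R (A i) (B (σ i))) ∧
        (∀ i, SameEpigenyClass R (A i) (B (τ i))) := by
  exact ((weak_krull_schmidt_biuniform_general hA hB).out 0 2).trans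
    (iff_and_self.2 fun ⟨σ, _⟩ => Fin.equiv_iff_eq.1 ⟨σ⟩)
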